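/- Let d be a floppy graph metric with vertex set V and edge set E, and let τ be the family of all nonempty open subsets of (0,∞). If the cardinal λ = |[V]² \ E| is at most countable, then player I has a winning strategy in the metric-extending game Game_d(λ,τ). -/

import Mathlib

open scoped Classical

universe u

namespace GraphMetricPaper

variable {X : Type u}

/-- The vertex set `V = ⋃ E` of a graph given by an adjacency relation `E`. -/
def Vtx (E : X → X → Prop) : Set X := {x | ∃ y, E x y}

/-- Two points are joined by a walk in the graph `E`. -/
def Joined (E : X → X → Prop) (x y : X) : Prop :=
  ∃ (n : ℕ) (c : ℕ → X), c 0 = x ∧ c n = y ∧ ∀ i, i < n → E (c i) (c (i + 1))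

/-- The set of weights of walks from `x` to `y`. -/
def walkSums (E : X → X → Prop) (d : X → X → ℝ) (x y : X) : Set ℝ :=
  {s | ∃ (n : ℕ) (c : ℕ → X), c 0 = x ∧ c n = y ∧ (∀ i, i < n → E (c i) (c (i + 1))) ∧
    s = ∑ i ∈ Finset.range n, d (c i) (c (i + 1))}

/-- The shortest-path pseudometric `d̂` determined by a weight function `d` on a graph `E`. -/
noncomputable def hatd (E : X → X → Prop) (d : X → X → ℝ) (x y : X) : ℝ :=
  sInf (walkSums E d x y)

/-- The function `ď` bounding the possible extensions of `d` from below: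
`ď(x,y) = sup_{ab ∈ E} max {0, d(ab) - d̂(a,x) - d̂(y,b)}`. -/
noncomputable def checkd (E : X → X → Prop) (d : X → X → ℝ) (x y : X) : ℝ :=
  sSup ({0} ∪ {r | ∃ a b, E a b ∧ r = d a b - hatd E d a x - hatd E d y b})

/-- The pseudometric `d̈` on doubletons:
`d̈(xy,uv) = min {d̂(x,u) + d̂(y,v), d̂(x,v) + d̂(y,u)}`. -/
noncomputable def ddot (E : X → X → Prop) (d : X → X → ℝ) (x y u v : X) : ℝ :=
  min (hatd E d x u + hatd E d y v) (hatd E d x v + hatd E d y u)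

/-- `d` is a graph pseudometric with edge relation `E`:  `E` is a (symmetric, irreflexive)
connected graph, `d` is a nonnegative symmetric weight on the edges, and `d = d̂` on edges. -/
structure IsGraphPseudometric (E : X → X → Prop) (d : X → X → ℝ) : Prop where
  symm : ∀ ⦃a b⦄, E a b → E b a
  irrefl : ∀ a, ¬ E a a
  wt_symm : ∀ ⦃a b⦄, E a b → d a b = d b a
  nonneg : ∀ ⦃a b⦄, E a b → 0 ≤ d a b
  connected : ∀ x ∈ Vtx E, ∀ y ∈ Vtx E, Joined E x y
  edge_eq : ∀ ⦃a b⦄, E a b → d a b = hatd E d a b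

/-- A graph metric is a graph pseudometric with strictly positive weights. -/
def IsGraphMetric (E : X → X → Prop) (d : X → X → ℝ) : Prop :=
  IsGraphPseudometric E d ∧ ∀ ⦃a b⦄, E a b → 0 < d a b

/-- A floppy graph pseudometric: `ď(x,y) < d̂(x,y)` for every `xy ∈ [V]² \ E`. -/
def FloppyPseudometric (E : X → X → Prop) (d : X → X → ℝ) : Prop :=
  IsGraphPseudometric E d ∧
    ∀ x ∈ Vtx E, ∀ y ∈ Vtx E, x ≠ y → ¬ E x y → checkd E d x y < hatd E d x y

/-- A floppy graph metric: `ď(x,y) < d̂(x,y)` for every `xy ∈ [V]² \ E`. -/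
def FloppyMetric (E : X → X → Prop) (d : X → X → ℝ) : Prop :=
  IsGraphMetric E d ∧
    ∀ x ∈ Vtx E, ∀ y ∈ Vtx E, x ≠ y → ¬ E x y → checkd E d x y < hatd E d x y

/-- The edge relation of the one-step extension `E ∪ {xy}`. -/
def extEdge (E : X → X → Prop) (x y : X) : X → X → Prop :=
  fun a b => E a b ∨ (a = x ∧ b = y) ∨ (a = y ∧ b = x)

/-- The weight function of the one-step extension `d ∪ {⟨xy, r⟩}`. -/
noncomputable def extWt (d : X → X → ℝ) (x y : X) (r : ℝ) : X → X → ℝ :=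
  fun a b => if (a = x ∧ b = y) ∨ (a = y ∧ b = x) then r else d a b

/-- The set `[V]² \ E` of unordered pairs of distinct vertices that are not edges. -/
def nonEdgePairs (E : X → X → Prop) : Set (Sym2 X) :=
  {e | ∃ a b : X, e = s(a, b) ∧ a ≠ b ∧ a ∈ Vtx E ∧ b ∈ Vtx E ∧ ¬ E a b}

/-- A set of (unordered) weighted pairs, presented as a relation `R`, is a full metric
on `V`: it is symmetric, its domain is exactly `[V]²`, it is single-valued, positive,
and satisfies the triangle inequality. -/
def IsFullMetricRel (V : Set X) (R : X → X → ℝ → Prop) : Prop :=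
  (∀ a b r, R a b r → R b a r) ∧
  (∀ a b r, R a b r → a ∈ V ∧ b ∈ V ∧ a ≠ b) ∧
  (∀ a b, a ∈ V → b ∈ V → a ≠ b → ∃ r, R a b r) ∧
  (∀ a b r s, R a b r → R a b s → r = s) ∧
  (∀ a b r, R a b r → 0 < r) ∧
  (∀ a b c r s t, R a b r → R b c s → R a c t → t ≤ r + s)

/-- A weight function `D` on `[V]²` is a full metric on `V`. -/
def IsFullMetricOn (V : Set X) (D : X → X → ℝ) : Prop :=
  (∀ a b, a ∈ V → b ∈ V → a ≠ b → D a b = D b a) ∧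
  (∀ a b, a ∈ V → b ∈ V → a ≠ b → 0 < D a b) ∧
  (∀ a b c, a ∈ V → b ∈ V → c ∈ V → a ≠ b → b ≠ c → a ≠ c → D a c ≤ D a b + D b c)

/-- Player I has a winning strategy in the metric-extending game `Game_d(lam, Fam)`:
there are functions `S1, S2` choosing, for each inning `β < lam` and each sequence of
previous answers of player II, a legal doubleton in `[V]²` and a set from `Fam`, such that
for every play of player II respecting the strategy, the resulting relation
`d ∪ {⟨x_α y_α, r_α⟩ : α < lam}` is a full metric on `V`. -/
def WinningStratI (V : Set X) (E : X → X → Prop) (d : X → X → ℝ)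
    (lam : Ordinal.{u}) (Fam : Set (Set ℝ)) : Prop :=
  ∃ (S1 : ∀ β : Ordinal.{u}, β < lam → (∀ α : Ordinal.{u}, α < β → ℝ) → X × X)
    (S2 : ∀ β : Ordinal.{u}, β < lam → (∀ α : Ordinal.{u}, α < β → ℝ) → Set ℝ),
    (∀ β hβ s, S2 β hβ s ∈ Fam) ∧
    (∀ β hβ s, (S1 β hβ s).1 ∈ V ∧ (S1 β hβ s).2 ∈ V ∧ (S1 β hβ s).1 ≠ (S1 β hβ s).2) ∧
    (∀ s : ∀ α : Ordinal.{u}, α < lam → ℝ,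
      (∀ α (hα : α < lam), s α hα ∈ S2 α hα (fun γ hγ => s γ (hγ.trans hα))) →
      IsFullMetricRel V (fun a b r =>
        (E a b ∧ r = d a b) ∨
        ∃ α, ∃ hα : α < lam,
          ((a = (S1 α hα (fun γ hγ => s γ (hγ.trans hα))).1 ∧
            b = (S1 α hα (fun γ hγ => s γ (hγ.trans hα))).2) ∨
           (a = (S1 α hα (fun γ hγ => s γ (hγ.trans hα))).2 ∧
            b = (S1 α hα (fun γ hγ => s γ (hγ.trans hα))).1)) ∧
          r = s α hα))

/-- Player II has a winning strategy in the metric-extending game `Game_d(lam, Fam)`: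
there is a function `T` assigning to each inning `β < lam` and each sequence of moves of
player I (of length `β + 1`) an answer in the set component of the last move, such that
for every legal play of player I, the resulting relation is not a full metric on `V`. -/
def WinningStratII (V : Set X) (E : X → X → Prop) (d : X → X → ℝ)
    (lam : Ordinal.{u}) (Fam : Set (Set ℝ)) : Prop :=
  ∃ T : ∀ β : Ordinal.{u}, β < lam → (∀ α : Ordinal.{u}, α ≤ β → (X × X) × Set ℝ) → ℝ,
    (∀ β hβ p, (p β le_rfl).2 ∈ Fam → T β hβ p ∈ (p β le_rfl).2) ∧
    (∀ p : ∀ α : Ordinal.{u}, α < lam → (X × X) × Set ℝ,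
      (∀ α hα, (p α hα).1.1 ∈ V ∧ (p α hα).1.2 ∈ V ∧ (p α hα).1.1 ≠ (p α hα).1.2 ∧
        (p α hα).2 ∈ Fam) →
      ¬ IsFullMetricRel V (fun a b r =>
        (E a b ∧ r = d a b) ∨
        ∃ α, ∃ hα : α < lam,
          ((a = (p α hα).1.1 ∧ b = (p α hα).1.2) ∨
           (a = (p α hα).1.2 ∧ b = (p α hα).1.1)) ∧
          r = T α hα (fun γ hγ => p γ (lt_of_le_of_lt hγ hα))))

/-- The edge relation of the glued graph `E_d = E_p ∪ ⋃_{f ∈ F} E_f`. -/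
def gluedEdge (Ep : X → X → Prop) (F : Set ((X → X → Prop) × (X → X → ℝ))) :
    X → X → Prop :=
  fun a b => Ep a b ∨ ∃ f ∈ F, f.1 a b

/-- `Λ(v; B) = inf {d̂(a,v) + d̂(v,b) - d̂(a,b) : a, b ∈ B}`. -/
noncomputable def Lam (E : X → X → Prop) (d : X → X → ℝ) (v : X) (B : Set X) : ℝ :=
  sInf {r | ∃ a ∈ B, ∃ b ∈ B, r = hatd E d a v + hatd E d v b - hatd E d a b}

/-- The gluing setup: a graph pseudometric `p = (Ep, wp)` and a family `F` of graph
pseudometrics such that each member meets `V_p`, agrees with `p̂` on the intersection of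
the vertex sets, and distinct members only meet inside `V_p`; `wd` is the glued weight
function `d = p ∪ ⋃ F` on `E_d = E_p ∪ ⋃_{f ∈ F} E_f`. -/
structure GluingSetup (Ep : X → X → Prop) (wp : X → X → ℝ)
    (F : Set ((X → X → Prop) × (X → X → ℝ))) (wd : X → X → ℝ) : Prop where
  hp : IsGraphPseudometric Ep wp
  hF : ∀ f ∈ F, IsGraphPseudometric f.1 f.2
  meet : ∀ f ∈ F, (Vtx f.1 ∩ Vtx Ep).Nonempty
  agree : ∀ f ∈ F, ∀ x ∈ Vtx f.1 ∩ Vtx Ep, ∀ y ∈ Vtx f.1 ∩ Vtx Ep, x ≠ y →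
    hatd f.1 f.2 x y = hatd Ep wp x y
  inter_sub : ∀ f ∈ F, ∀ g ∈ F, f ≠ g → Vtx f.1 ∩ Vtx g.1 ⊆ Vtx Ep
  wd_p : ∀ ⦃a b⦄, Ep a b → wd a b = wp a b
  wd_F : ∀ f ∈ F, ∀ ⦃a b⦄, f.1 a b → wd a b = f.2 a b

/-!
A floppy graph metric `d` extended to a new pair `xy` by any weight `r` with `ď(x,y) < r < d̂(x,y)`
is again floppy. For an old edge `ab` and a remaining pair `uv`, consider a walk from `a` to `b`
through `u` and `v`: if it uses the new edge, it exceeds `d(ab)` by at least `r - ď(x,y)`, because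
the extension by `ď(x,y)` is still a graph pseudometric; otherwise it exceeds `d(ab)` by at least
`d̂(u,v) - ď(u,v)`. Both bounds are independent of `ab`. If `ab` is the new edge `xy`, such a walk
is longer than `r` because `r < d̂(x,y)` and `uv ≠ xy`.

Player I enumerates `[V]² \ E` in order type `λ ≤ ω` and always offers the interval
`(ď(x,y), d̂(x,y))`, which keeps all the finite stages floppy. The limit is a full metric because a
triangle has only three sides, all of which are present at some finite stage.
-/

/-! ### Walks and the shortest-path pseudometric -/

section Walks

variable {E E' : X → X → Prop} {d d' : X → X → ℝ} {x y z : X} {s t : ℝ}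

theorem zero_mem_walkSums (x : X) : (0 : ℝ) ∈ walkSums E d x x :=
  ⟨0, fun _ => x, rfl, rfl, by simp, by simp⟩

theorem walkSums_snoc (hs : s ∈ walkSums E d x y) (h : E y z) : s + d y z ∈ walkSums E d x z := by
  obtain ⟨n, c, h0, hn, hc, rfl⟩ := hs
  refine ⟨n + 1, fun i => if i ≤ n then c i else z, by simp [h0], by simp, fun i hi => ?_, ?_⟩
  · rcases Nat.lt_succ_iff_lt_or_eq.mp hi with hi | rfl
    · simpa [hi.le, Nat.succ_le_of_lt hi] using hc i hi
    · simpa [hn] using h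
  · rw [Finset.sum_range_succ]
    congr 1
    · refine Finset.sum_congr rfl fun i hi => ?_
      have hi := Finset.mem_range.mp hi
      simp [hi.le, Nat.succ_le_of_lt hi]
    · simp [hn]

theorem edge_mem_walkSums (h : E x y) : d x y ∈ walkSums E d x y := by
  simpa using walkSums_snoc (zero_mem_walkSums x) h

theorem walkSums_induction {P : X → ℝ → Prop} (h0 : P x 0)
    (hstep : ∀ y z s, P y s → E y z → P z (s + d y z)) (hs : s ∈ walkSums E d x y) : P y s := by
  obtain ⟨n, c, hc0, rfl, hc, rfl⟩ := hs
  induction n with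
  | zero => simpa [hc0] using h0
  | succ n ih =>
    rw [Finset.sum_range_succ]
    exact hstep _ _ _ (ih fun i hi => hc i (hi.trans n.lt_succ_self)) (hc n n.lt_succ_self)

theorem walkSums_append (hs : s ∈ walkSums E d x y) (ht : t ∈ walkSums E d y z) :
    s + t ∈ walkSums E d x z :=
  walkSums_induction (P := fun w t => s + t ∈ walkSums E d x w) (by simpa using hs)
    (fun _ _ _ h hE => by rw [← add_assoc]; exact walkSums_snoc h hE) ht

theorem walkSums_mono (hE : E ≤ E') (hd : ∀ ⦃a b⦄, E a b → d' a b = d a b) (x y : X) :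
    walkSums E d x y ⊆ walkSums E' d' x y := fun _ hs =>
  walkSums_induction (P := fun y s => s ∈ walkSums E' d' x y) (zero_mem_walkSums x)
    (fun _ _ _ h hyz => hd hyz ▸ walkSums_snoc h (hE _ _ hyz)) hs

theorem walkSums_nonneg (h0 : ∀ ⦃a b⦄, E a b → 0 ≤ d a b) (hs : s ∈ walkSums E d x y) : 0 ≤ s :=
  walkSums_induction (P := fun _ s => 0 ≤ s) le_rfl (fun _ _ _ hs hE => add_nonneg hs (h0 hE)) hs

theorem bddBelow_walkSums (h0 : ∀ ⦃a b⦄, E a b → 0 ≤ d a b) (x y : X) :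
    BddBelow (walkSums E d x y) :=
  ⟨0, fun _ hs => walkSums_nonneg h0 hs⟩

theorem Joined.walkSums_nonempty (h : Joined E x y) (d : X → X → ℝ) :
    (walkSums E d x y).Nonempty := by
  obtain ⟨n, c, h0, hn, hc⟩ := h
  exact ⟨_, n, c, h0, hn, hc, rfl⟩

theorem Joined.mono (hE : E ≤ E') (h : Joined E x y) : Joined E' x y := by
  obtain ⟨n, c, h0, hn, hc⟩ := h
  exact ⟨n, c, h0, hn, fun i hi => hE _ _ (hc i hi)⟩

theorem hatd_nonneg (h0 : ∀ ⦃a b⦄, E a b → 0 ≤ d a b) (x y : X) : 0 ≤ hatd E d x y :=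
  Real.sInf_nonneg fun _ hs => walkSums_nonneg h0 hs

theorem hatd_self (h0 : ∀ ⦃a b⦄, E a b → 0 ≤ d a b) (x : X) : hatd E d x x = 0 :=
  le_antisymm (csInf_le (bddBelow_walkSums h0 x x) (zero_mem_walkSums x)) (hatd_nonneg h0 x x)

theorem hatd_le_of_edge (h0 : ∀ ⦃a b⦄, E a b → 0 ≤ d a b) (h : E x y) : hatd E d x y ≤ d x y :=
  csInf_le (bddBelow_walkSums h0 x y) (edge_mem_walkSums h)

open scoped Pointwise in
theorem hatd_triangle (h0 : ∀ ⦃a b⦄, E a b → 0 ≤ d a b) (hxy : Joined E x y)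
    (hyz : Joined E y z) : hatd E d x z ≤ hatd E d x y + hatd E d y z := by
  have hS := hxy.walkSums_nonempty d
  have hT := hyz.walkSums_nonempty d
  calc hatd E d x z ≤ sInf (walkSums E d x y + walkSums E d y z) :=
        csInf_le_csInf (bddBelow_walkSums h0 x z) (hS.add hT)
          (Set.add_subset_iff.mpr fun _ hs _ ht => walkSums_append hs ht)
    _ = hatd E d x y + hatd E d y z :=
        csInf_add hS (bddBelow_walkSums h0 x y) hT (bddBelow_walkSums h0 y z)

theorem hatd_anti (hE : E ≤ E') (h0 : ∀ ⦃a b⦄, E' a b → 0 ≤ d' a b)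
    (hd : ∀ ⦃a b⦄, E a b → d' a b = d a b) (h : Joined E x y) : hatd E' d' x y ≤ hatd E d x y :=
  csInf_le_csInf (bddBelow_walkSums h0 x y) (h.walkSums_nonempty d) (walkSums_mono hE hd x y)

theorem hatd_congr (h : ∀ ⦃a b⦄, E a b → d' a b = d a b) : hatd E d' = hatd E d := by
  ext x y
  exact congrArg sInf ((walkSums_mono le_rfl (fun _ _ hab => (h hab).symm) x y).antisymm
    (walkSums_mono le_rfl h x y))

theorem checkd_congr (h : ∀ ⦃a b⦄, E a b → d' a b = d a b) : checkd E d' = checkd E d := by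
  ext x y
  simp only [checkd, hatd_congr h]
  congr 2
  ext r
  exact exists₂_congr fun a b => and_congr_right fun hab => by rw [h hab]

theorem checkd_nonneg (x y : X) : 0 ≤ checkd E d x y :=
  Real.sSup_nonneg' ⟨0, by simp, le_rfl⟩

theorem checkd_lt_hatd_of_slack {ε : ℝ} (hε : 0 < ε) (hpos : 0 < hatd E d x y)
    (h : ∀ ⦃a b⦄, E a b → d a b + ε ≤ hatd E d a x + hatd E d x y + hatd E d y b) :
    checkd E d x y < hatd E d x y := by
  refine lt_of_le_of_lt (csSup_le ⟨0, Or.inl rfl⟩ ?_) (max_lt hpos (sub_lt_self _ hε))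
  rintro _ (rfl | ⟨a, b, hab, rfl⟩)
  · exact le_max_left _ _
  · exact le_max_of_le_right (by linarith [h hab])

end Walks

namespace IsGraphPseudometric

variable {E : X → X → Prop} {d d' : X → X → ℝ} {x y z u v a b : X}

theorem right_mem (hd : IsGraphPseudometric E d) (h : E a b) : b ∈ Vtx E := ⟨a, hd.symm h⟩

theorem walkSums_symm (hd : IsGraphPseudometric E d) {s : ℝ} (hs : s ∈ walkSums E d x y) :
    s ∈ walkSums E d y x :=
  walkSums_induction (P := fun y s => s ∈ walkSums E d y x) (zero_mem_walkSums x)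
    (fun _ _ _ h hE => by
      rw [add_comm, hd.wt_symm hE]
      exact walkSums_append (edge_mem_walkSums (hd.symm hE)) h) hs

theorem hatd_comm (hd : IsGraphPseudometric E d) (x y : X) : hatd E d x y = hatd E d y x :=
  congrArg sInf (Set.ext fun _ => ⟨hd.walkSums_symm, hd.walkSums_symm⟩)

theorem triangle (hd : IsGraphPseudometric E d) (hx : x ∈ Vtx E) (hy : y ∈ Vtx E)
    (hz : z ∈ Vtx E) : hatd E d x z ≤ hatd E d x y + hatd E d y z :=
  hatd_triangle hd.nonneg (hd.connected x hx y hy) (hd.connected y hy z hz)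

theorem triangle4 (hd : IsGraphPseudometric E d) (ha : a ∈ Vtx E) (hu : u ∈ Vtx E)
    (hv : v ∈ Vtx E) (hb : b ∈ Vtx E) :
    hatd E d a b ≤ hatd E d a u + hatd E d u v + hatd E d v b := by
  linarith [hd.triangle ha hu hb, hd.triangle hu hv hb]

theorem edge_le_checkd (hd : IsGraphPseudometric E d) (hx : x ∈ Vtx E) (hy : y ∈ Vtx E)
    (h : E a b) : d a b ≤ hatd E d a x + checkd E d x y + hatd E d y b := by
  suffices d a b - hatd E d a x - hatd E d y b ≤ checkd E d x y by linarith
  refine le_csSup ⟨hatd E d x y, ?_⟩ (Or.inr ⟨a, b, h, rfl⟩)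
  rintro _ (rfl | ⟨a, b, h, rfl⟩)
  · exact hatd_nonneg hd.nonneg x y
  · linarith [hd.edge_eq h, hd.triangle4 ⟨b, h⟩ hx hy (hd.right_mem h)]

theorem congr (hd : IsGraphPseudometric E d) (h : ∀ ⦃a b⦄, E a b → d' a b = d a b) :
    IsGraphPseudometric E d' where
  symm := hd.symm
  irrefl := hd.irrefl
  wt_symm a b hab := by rw [h hab, h (hd.symm hab), hd.wt_symm hab]
  nonneg a b hab := h hab ▸ hd.nonneg hab
  connected := hd.connected
  edge_eq a b hab := by rw [h hab, hatd_congr h, hd.edge_eq hab]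

end IsGraphPseudometric

namespace FloppyMetric

variable {E : X → X → Prop} {d d' : X → X → ℝ} {x y : X}

theorem congr (hd : FloppyMetric E d) (h : ∀ ⦃a b⦄, E a b → d' a b = d a b) :
    FloppyMetric E d' := by
  refine ⟨⟨hd.1.1.congr h, fun a b hab => h hab ▸ hd.1.2 hab⟩, ?_⟩
  rw [hatd_congr h, checkd_congr h]
  exact hd.2

theorem hatd_pos (hd : FloppyMetric E d) (hx : x ∈ Vtx E) (hy : y ∈ Vtx E) (hxy : x ≠ y) :
    0 < hatd E d x y := by
  by_cases h : E x y
  · exact hd.1.1.edge_eq h ▸ hd.1.2 h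
  · exact (checkd_nonneg x y).trans_lt (hd.2 x hx y hy hxy h)

end FloppyMetric

/-! ### One-step extensions -/

/-- The pair `xy` belongs to `[V]² \ E`. -/
structure NonEdge (E : X → X → Prop) (x y : X) : Prop where
  left_mem : x ∈ Vtx E
  right_mem : y ∈ Vtx E
  ne : x ≠ y
  not_adj : ¬ E x y

/-- The shortest-path pseudometric of the one-step extension `d ∪ {⟨xy, r⟩}`. -/
noncomputable def extHat (E : X → X → Prop) (d : X → X → ℝ) (x y : X) (r : ℝ) : X → X → ℝ :=
  hatd (extEdge E x y) (extWt d x y r)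

section OneStep

variable {E : X → X → Prop} {d : X → X → ℝ} {x y u v a b : X} {r r' s : ℝ}

theorem NonEdge.symm (hxy : NonEdge E x y) (hE : ∀ ⦃a b⦄, E a b → E b a) : NonEdge E y x :=
  ⟨hxy.right_mem, hxy.left_mem, hxy.ne.symm, fun h => hxy.not_adj (hE h)⟩

theorem FloppyMetric.checkd_lt_hatd (hd : FloppyMetric E d) (hxy : NonEdge E x y) :
    checkd E d x y < hatd E d x y :=
  hd.2 x hxy.left_mem y hxy.right_mem hxy.ne hxy.not_adj

theorem le_extEdge : E ≤ extEdge E x y := fun _ _ => Or.inl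

theorem extEdge_comm : extEdge E y x = extEdge E x y := by
  ext a b
  exact or_congr_right or_comm

theorem extWt_comm : extWt d y x r = extWt d x y r := by
  ext a b
  exact if_congr or_comm rfl rfl

theorem extHat_comm : extHat E d y x r = extHat E d x y r := by
  rw [extHat, extEdge_comm, extWt_comm, extHat]

theorem extWt_left : extWt d x y r x y = r := if_pos (Or.inl ⟨rfl, rfl⟩)

theorem extWt_right : extWt d x y r y x = r := if_pos (Or.inr ⟨rfl, rfl⟩)

theorem extWt_self (h : d y x = d x y) : extWt d x y (d x y) = d := by
  ext a b
  refine ite_eq_right_iff.mpr ?_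
  rintro (⟨rfl, rfl⟩ | ⟨rfl, rfl⟩)
  exacts [rfl, h.symm]

theorem Vtx_extEdge (hx : x ∈ Vtx E) (hy : y ∈ Vtx E) : Vtx (extEdge E x y) = Vtx E := by
  ext a
  constructor
  · rintro ⟨b, h | ⟨rfl, -⟩ | ⟨rfl, -⟩⟩
    exacts [⟨b, h⟩, hx, hy]
  · rintro ⟨b, h⟩
    exact ⟨b, Or.inl h⟩

namespace IsGraphPseudometric

theorem extWt_of_edge (hd : IsGraphPseudometric E d) (hxy : NonEdge E x y) (h : E a b) :
    extWt d x y r a b = d a b := by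
  refine if_neg ?_
  rintro (⟨rfl, rfl⟩ | ⟨rfl, rfl⟩)
  exacts [hxy.not_adj h, hxy.not_adj (hd.symm h)]

theorem extWt_nonneg (hd : IsGraphPseudometric E d) (hxy : NonEdge E x y) (hr : 0 ≤ r) ⦃a b : X⦄
    (h : extEdge E x y a b) : 0 ≤ extWt d x y r a b := by
  rcases h with h | ⟨rfl, rfl⟩ | ⟨rfl, rfl⟩
  · exact hd.extWt_of_edge hxy h ▸ hd.nonneg h
  · rwa [extWt_left]
  · rwa [extWt_right]

theorem extHat_nonneg (hd : IsGraphPseudometric E d) (hxy : NonEdge E x y) (hr : 0 ≤ r) (u v : X) :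
    0 ≤ extHat E d x y r u v :=
  hatd_nonneg (hd.extWt_nonneg hxy hr) u v

-- A shortest walk of the extension uses the new edge at most once.
theorem le_of_mem_walkSums_ext (hd : IsGraphPseudometric E d) (hxy : NonEdge E x y)
    (hr : 0 ≤ r) (hu : u ∈ Vtx E)
    (hs : s ∈ walkSums (extEdge E x y) (extWt d x y r) u v) :
    min (hatd E d u v)
      (min (hatd E d u x + r + hatd E d y v) (hatd E d u y + r + hatd E d x v)) ≤ s := by
  have hself := hatd_self hd.nonneg
  have hpos := hatd_nonneg hd.nonneg
  suffices v ∈ Vtx E ∧ (hatd E d u v ≤ s ∨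
      hatd E d u x + r + hatd E d y v ≤ s ∨ hatd E d u y + r + hatd E d x v ≤ s) by
    simpa only [min_le_iff] using this.2
  refine walkSums_induction (P := fun v s => v ∈ Vtx E ∧ (hatd E d u v ≤ s ∨
      hatd E d u x + r + hatd E d y v ≤ s ∨ hatd E d u y + r + hatd E d x v ≤ s))
    ⟨hu, Or.inl (hself u).le⟩ ?_ hs
  rintro v w s ⟨hv, h⟩ (hvw | ⟨rfl, rfl⟩ | ⟨rfl, rfl⟩)
  · have hw := hd.right_mem hvw
    have hextend : ∀ p ∈ Vtx E, hatd E d p w ≤ hatd E d p v + d v w := fun p hp =>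
      hd.edge_eq hvw ▸ hd.triangle hp hv hw
    rw [hd.extWt_of_edge hxy hvw]
    refine ⟨hw, h.imp (fun h => ?_) (Or.imp (fun h => ?_) fun h => ?_)⟩
    · linarith [hextend u hu]
    · linarith [hextend y hxy.right_mem]
    · linarith [hextend x hxy.left_mem]
  · rw [extWt_left]
    refine ⟨hxy.right_mem, ?_⟩
    rcases h with h | h | h
    · exact Or.inr (Or.inl (by linarith [hself w]))
    · exact Or.inr (Or.inl (by linarith [hself w, hpos w v]))
    · exact Or.inl (by linarith [hself v])
  · rw [extWt_right]
    refine ⟨hxy.left_mem, ?_⟩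
    rcases h with h | h | h
    · exact Or.inr (Or.inr (by linarith [hself w]))
    · exact Or.inl (by linarith [hself v])
    · exact Or.inr (Or.inr (by linarith [hself w, hpos w v]))

theorem extHat_eq_min (hd : IsGraphPseudometric E d) (hxy : NonEdge E x y) (hr : 0 ≤ r)
    (hu : u ∈ Vtx E) (hv : v ∈ Vtx E) :
    extHat E d x y r u v = min (hatd E d u v)
      (min (hatd E d u x + r + hatd E d y v) (hatd E d u y + r + hatd E d x v)) := by
  have h0 := hd.extWt_nonneg hxy hr
  have hj : ∀ {p q}, p ∈ Vtx E → q ∈ Vtx E → Joined (extEdge E x y) p q := fun hp hq =>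
    (hd.connected _ hp _ hq).mono le_extEdge
  have hanti : ∀ {p q}, p ∈ Vtx E → q ∈ Vtx E → extHat E d x y r p q ≤ hatd E d p q :=
    fun hp hq => hatd_anti le_extEdge h0 (fun _ _ => hd.extWt_of_edge hxy)
      (hd.connected _ hp _ hq)
  have hvia : ∀ {p q}, p ∈ Vtx E → q ∈ Vtx E → extHat E d x y r p q ≤ r →
      extHat E d x y r u v ≤ hatd E d u p + r + hatd E d q v := fun {p q} hp hq hpq => by
    have h1 : extHat E d x y r u v ≤ extHat E d x y r u p + extHat E d x y r p v :=
      hatd_triangle h0 (hj hu hp) (hj hp hv)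
    have h2 : extHat E d x y r p v ≤ extHat E d x y r p q + extHat E d x y r q v :=
      hatd_triangle h0 (hj hp hq) (hj hq hv)
    linarith [hanti hu hp, hanti hq hv]
  refine le_antisymm (le_min (hanti hu hv) (le_min ?_ ?_))
    (le_csInf ((hj hu hv).walkSums_nonempty _) fun _ => hd.le_of_mem_walkSums_ext hxy hr hu)
  · exact hvia hxy.left_mem hxy.right_mem
      ((hatd_le_of_edge h0 (Or.inr (Or.inl ⟨rfl, rfl⟩))).trans_eq extWt_left)
  · exact hvia hxy.right_mem hxy.left_mem
      ((hatd_le_of_edge h0 (Or.inr (Or.inr ⟨rfl, rfl⟩))).trans_eq extWt_right)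

theorem hatd_le_extHat_or (hd : IsGraphPseudometric E d) (hxy : NonEdge E x y) (hr' : 0 ≤ r')
    (hrr : r' ≤ r) (hu : u ∈ Vtx E) (hv : v ∈ Vtx E) :
    hatd E d u v ≤ extHat E d x y r u v ∨
      extHat E d x y r' u v + (r - r') ≤ extHat E d x y r u v := by
  rw [hd.extHat_eq_min hxy hr' hu hv, hd.extHat_eq_min hxy (hr'.trans hrr) hu hv]
  grind

theorem extHat_le_hatd (hd : IsGraphPseudometric E d) (hxy : NonEdge E x y) (hr : 0 ≤ r)
    (hu : u ∈ Vtx E) (hv : v ∈ Vtx E) : extHat E d x y r u v ≤ hatd E d u v :=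
  (hd.extHat_eq_min hxy hr hu hv).trans_le (min_le_left _ _)

theorem extHat_mono (hd : IsGraphPseudometric E d) (hxy : NonEdge E x y) (hr' : 0 ≤ r')
    (hrr : r' ≤ r) (hu : u ∈ Vtx E) (hv : v ∈ Vtx E) :
    extHat E d x y r' u v ≤ extHat E d x y r u v := by
  rcases hd.hatd_le_extHat_or hxy hr' hrr hu hv with h | h
  · exact (hd.extHat_le_hatd hxy hr' hu hv).trans h
  · linarith

theorem hatd_le_extHat_or_le (hd : IsGraphPseudometric E d) (hxy : NonEdge E x y) (hr : 0 ≤ r)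
    (hu : u ∈ Vtx E) (hv : v ∈ Vtx E) :
    hatd E d u v ≤ extHat E d x y r u v ∨ r ≤ extHat E d x y r u v :=
  (hd.hatd_le_extHat_or hxy le_rfl hr hu hv).imp_right fun h => by
    linarith [hd.extHat_nonneg hxy le_rfl u v]

theorem edge_le_extHat (hd : IsGraphPseudometric E d) (hxy : NonEdge E x y)
    (hr : checkd E d x y ≤ r) (h : E a b) : d a b ≤ extHat E d x y r a b := by
  have hx := hxy.left_mem
  have hy := hxy.right_mem
  rw [hd.extHat_eq_min hxy ((checkd_nonneg x y).trans hr) ⟨b, h⟩ (hd.right_mem h)]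
  refine le_min (hd.edge_eq h).le (le_min ?_ ?_)
  · linarith [hd.edge_le_checkd hx hy h]
  · linarith [hd.edge_le_checkd hx hy (hd.symm h), hd.wt_symm h, hd.hatd_comm a y,
      hd.hatd_comm x b]

theorem le_extHat_new (hd : IsGraphPseudometric E d) (hxy : NonEdge E x y) (hr : 0 ≤ r)
    (hr' : r ≤ hatd E d x y) : r ≤ extHat E d x y r x y :=
  (hd.hatd_le_extHat_or_le hxy hr hxy.left_mem hxy.right_mem).elim hr'.trans id

theorem extend (hd : IsGraphPseudometric E d) (hxy : NonEdge E x y)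
    (hr : checkd E d x y ≤ r) (hr' : r ≤ hatd E d x y) :
    IsGraphPseudometric (extEdge E x y) (extWt d x y r) := by
  have hr0 := (checkd_nonneg x y).trans hr
  have h0 := hd.extWt_nonneg hxy hr0
  refine ⟨?symm, ?irrefl, ?wt_symm, h0, ?connected, fun a b h => le_antisymm ?le_hatd
    (hatd_le_of_edge h0 h)⟩
  case symm =>
    rintro a b (h | ⟨rfl, rfl⟩ | ⟨rfl, rfl⟩)
    exacts [Or.inl (hd.symm h), Or.inr (Or.inr ⟨rfl, rfl⟩), Or.inr (Or.inl ⟨rfl, rfl⟩)]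
  case irrefl =>
    rintro a (h | ⟨rfl, h⟩ | ⟨rfl, h⟩)
    exacts [hd.irrefl a h, hxy.ne h, hxy.ne h.symm]
  case wt_symm =>
    rintro a b (h | ⟨rfl, rfl⟩ | ⟨rfl, rfl⟩)
    · rw [hd.extWt_of_edge hxy h, hd.extWt_of_edge hxy (hd.symm h), hd.wt_symm h]
    · rw [extWt_left, extWt_right]
    · rw [extWt_left, extWt_right]
  case connected =>
    rw [Vtx_extEdge hxy.left_mem hxy.right_mem]
    exact fun a ha b hb => (hd.connected a ha b hb).mono le_extEdge
  case le_hatd =>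
    rcases h with h | ⟨rfl, rfl⟩ | ⟨rfl, rfl⟩
    · exact hd.extWt_of_edge hxy h ▸ hd.edge_le_extHat hxy hr h
    · exact extWt_left.trans_le (hd.le_extHat_new hxy hr0 hr')
    · rw [extWt_right, extEdge_comm, extWt_comm]
      exact hd.le_extHat_new (hxy.symm hd.symm) hr0 (hd.hatd_comm b a ▸ hr')

end IsGraphPseudometric

namespace FloppyMetric

theorem extHat_pos (hd : FloppyMetric E d) (hxy : NonEdge E x y) (hr : 0 < r) (hu : u ∈ Vtx E)
    (hv : v ∈ Vtx E) (huv : u ≠ v) : 0 < extHat E d x y r u v :=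
  (hd.1.1.hatd_le_extHat_or_le hxy hr.le hu hv).elim (hd.hatd_pos hu hv huv).trans_le hr.trans_le

-- Compare with the extension by the smaller weight `ď(x,y)`.
theorem exists_slack_old_edges (hd : FloppyMetric E d) (hxy : NonEdge E x y)
    (hr : checkd E d x y < r) (huv : NonEdge E u v) :
    ∃ ε > 0, ∀ ⦃a b⦄, E a b → d a b + ε ≤
      extHat E d x y r a u + extHat E d x y r u v + extHat E d x y r v b := by
  have hg := hd.1.1
  have hu := huv.left_mem
  have hv := huv.right_mem
  have h0 : 0 ≤ checkd E d x y := checkd_nonneg x y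
  have hcheck : IsGraphPseudometric (extEdge E x y) (extWt d x y (checkd E d x y)) :=
    hg.extend hxy le_rfl (hd.checkd_lt_hatd hxy).le
  refine ⟨min (hatd E d u v - checkd E d u v) (r - checkd E d x y),
    lt_min (sub_pos.mpr (hd.checkd_lt_hatd huv)) (sub_pos.mpr hr), fun a b h => ?_⟩
  have ha : a ∈ Vtx E := ⟨b, h⟩
  have hb := hg.right_mem h
  have havoid : d a b ≤ hatd E d a u + checkd E d u v + hatd E d v b := hg.edge_le_checkd hu hv h
  have hthrough : d a b ≤ extHat E d x y (checkd E d x y) a u +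
      extHat E d x y (checkd E d x y) u v + extHat E d x y (checkd E d x y) v b := by
    refine (hg.edge_le_extHat hxy le_rfl h).trans (hcheck.triangle4 ?_ ?_ ?_ ?_) <;>
      rwa [Vtx_extEdge hxy.left_mem hxy.right_mem]
  have hau := hg.extHat_mono hxy h0 hr.le ha hu
  have huv' := hg.extHat_mono hxy h0 hr.le hu hv
  have hvb := hg.extHat_mono hxy h0 hr.le hv hb
  have hε₁ := min_le_left (hatd E d u v - checkd E d u v) (r - checkd E d x y)
  have hε₂ := min_le_right (hatd E d u v - checkd E d u v) (r - checkd E d x y)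
  rcases hg.hatd_le_extHat_or hxy h0 hr.le ha hu with h1 | h1
  · rcases hg.hatd_le_extHat_or hxy h0 hr.le hu hv with h2 | h2
    · rcases hg.hatd_le_extHat_or hxy h0 hr.le hv hb with h3 | h3 <;> linarith
    · linarith
  · linarith

theorem slack_new_edge (hd : FloppyMetric E d) (hxy : NonEdge E x y) (hr : 0 < r)
    (hr' : r < hatd E d x y) (hu : u ∈ Vtx E) (hv : v ∈ Vtx E) (huv : u ≠ v)
    (hne : ¬ (u = x ∧ v = y)) :
    r < extHat E d x y r x u + extHat E d x y r u v + extHat E d x y r v y := by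
  have hg := hd.1.1
  have hx := hxy.left_mem
  have hy := hxy.right_mem
  have h0 := hg.extHat_nonneg hxy hr.le
  have hpos := hd.extHat_pos hxy hr hu hv huv
  rcases hg.hatd_le_extHat_or_le hxy hr.le hx hu with h1 | h1
  swap; · linarith [h0 v y]
  rcases hg.hatd_le_extHat_or_le hxy hr.le hv hy with h2 | h2
  swap; · linarith [h0 x u]
  rcases hg.hatd_le_extHat_or_le hxy hr.le hu hv with h3 | h3
  · linarith [hg.triangle4 hx hu hv hy]
  · by_cases hux : u = x
    · linarith [h0 x u, hd.extHat_pos hxy hr hv hy fun hvy => hne ⟨hux, hvy⟩]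
    · linarith [h0 v y, hd.extHat_pos hxy hr hx hu (Ne.symm hux)]

theorem extend (hd : FloppyMetric E d) (hxy : NonEdge E x y) (hr : checkd E d x y < r)
    (hr' : r < hatd E d x y) : FloppyMetric (extEdge E x y) (extWt d x y r) := by
  have hg := hd.1.1
  have hr0 : 0 < r := (checkd_nonneg x y).trans_lt hr
  refine ⟨⟨hg.extend hxy hr.le hr'.le, ?_⟩, ?_⟩
  · rintro a b (h | ⟨rfl, rfl⟩ | ⟨rfl, rfl⟩)
    · exact hg.extWt_of_edge hxy h ▸ hd.1.2 h
    · rwa [extWt_left]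
    · rwa [extWt_right]
  · rw [Vtx_extEdge hxy.left_mem hxy.right_mem]
    intro u hu v hv huv hE'
    obtain ⟨ε, hε, hold⟩ :=
      hd.exists_slack_old_edges hxy hr ⟨hu, hv, huv, fun h => hE' (Or.inl h)⟩
    have hnew := hd.slack_new_edge hxy hr0 hr' hu hv huv fun h => hE' (Or.inr (Or.inl h))
    have hnew' := hd.slack_new_edge (hxy.symm hg.symm) hr0 (hg.hatd_comm x y ▸ hr') hu hv huv
      fun h => hE' (Or.inr (Or.inr h))
    rw [extHat_comm] at hnew'
    refine checkd_lt_hatd_of_slack (lt_min hε (lt_min (sub_pos.mpr hnew) (sub_pos.mpr hnew')))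
      (hd.extHat_pos hxy hr0 hu hv huv) ?_
    rintro a b (h | ⟨rfl, rfl⟩ | ⟨rfl, rfl⟩)
    · rw [hg.extWt_of_edge hxy h]
      exact (add_le_add_right (min_le_left _ _) _).trans (hold h)
    · rw [extWt_left, ← le_sub_iff_add_le']
      exact (min_le_right _ _).trans (min_le_left _ _)
    · rw [extWt_right, ← le_sub_iff_add_le']
      exact (min_le_right _ _).trans (min_le_right _ _)

end FloppyMetric

end OneStep

/-! ### Full metrics as directed unions -/

section FullMetric

variable {V : Set X} {D : X → X → ℝ}

theorem IsFullMetricOn.of_directed {I : Type*} {G : I → X → X → Prop} (hG : Directed (· ≤ ·) G)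
    (hD : ∀ i, IsGraphMetric (G i) D) (hV : ∀ a ∈ V, ∀ b ∈ V, a ≠ b → ∃ i, G i a b) :
    IsFullMetricOn V D := by
  refine ⟨fun a b ha hb hab => ?_, fun a b ha hb hab => ?_, fun a b c ha hb hc hab hbc hac => ?_⟩
  · obtain ⟨i, hi⟩ := hV a ha b hb hab
    exact (hD i).1.wt_symm hi
  · obtain ⟨i, hi⟩ := hV a ha b hb hab
    exact (hD i).2 hi
  · obtain ⟨i, hi⟩ := hV a ha b hb hab
    obtain ⟨j, hj⟩ := hV b hb c hc hbc
    obtain ⟨k, hk⟩ := hV a ha c hc hac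
    obtain ⟨l, hil, hjl⟩ := hG i j
    obtain ⟨m, hlm, hkm⟩ := hG l k
    have hab := hlm _ _ (hil _ _ hi)
    have hbc := hlm _ _ (hjl _ _ hj)
    have hac := hkm _ _ hk
    have hm := (hD m).1
    rw [hm.edge_eq hab, hm.edge_eq hbc, hm.edge_eq hac]
    exact hm.triangle ⟨b, hab⟩ ⟨c, hbc⟩ (hm.right_mem hbc)

theorem IsFullMetricOn.isFullMetricRel (hD : IsFullMetricOn V D) :
    IsFullMetricRel V fun a b r => (a ∈ V ∧ b ∈ V ∧ a ≠ b) ∧ r = D a b := by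
  obtain ⟨hsymm, hpos, htri⟩ := hD
  refine ⟨?_, fun _ _ _ h => h.1, fun a b ha hb hab => ⟨D a b, ⟨ha, hb, hab⟩, rfl⟩,
    fun _ _ _ _ h h' => h.2.trans h'.2.symm, ?_, ?_⟩
  · rintro a b _ ⟨⟨ha, hb, hab⟩, rfl⟩
    exact ⟨⟨hb, ha, hab.symm⟩, hsymm a b ha hb hab⟩
  · rintro a b _ ⟨⟨ha, hb, hab⟩, rfl⟩
    exact hpos a b ha hb hab
  · rintro a b c _ _ _ ⟨⟨ha, hb, hab⟩, rfl⟩ ⟨⟨-, hc, hbc⟩, rfl⟩ ⟨⟨-, -, hac⟩, rfl⟩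
    exact htri a b c ha hb hc hab hbc hac

end FullMetric

/-! ### The game -/

theorem exists_bijOn_Iio_ord {A : Type u} (S : Set A) :
    ∃ ι : A → Ordinal.{u}, Set.BijOn ι S (Set.Iio (Cardinal.mk S).ord) := by
  obtain ⟨φ⟩ := Cardinal.eq.mp (Cardinal.mk_ord_toType (Cardinal.mk S))
  let g : S ≃ Set.Iio (Cardinal.mk S).ord := φ.symm.trans Ordinal.ToType.mk.symm.toEquiv
  let ι : A → Ordinal.{u} := Function.extend Subtype.val (fun q => (g q : Ordinal.{u})) 0
  have hι (q : S) : ι q = g q := Subtype.val_injective.extend_apply _ _ q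
  refine ⟨ι, fun q hq => hι ⟨q, hq⟩ ▸ (g ⟨q, hq⟩).2, fun p hp q hq h => ?_, fun β hβ => ?_⟩
  · rw [hι ⟨p, hp⟩, hι ⟨q, hq⟩] at h
    exact congrArg Subtype.val (g.injective (Subtype.ext h))
  · exact ⟨g.symm ⟨β, hβ⟩, Subtype.property _, by rw [hι, g.apply_symm_apply]⟩

section Play

/-- The graph known before inning `β`, when player I has chosen the pairs `q ∈ [V]² \ E`
with `ι q < β`. -/
def stageEdge (E : X → X → Prop) (ι : Sym2 X → Ordinal.{u}) (β : Ordinal.{u}) : X → X → Prop :=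
  fun a b => E a b ∨ s(a, b) ∈ nonEdgePairs E ∧ ι s(a, b) < β

/-- The weights of all the pairs when `f α` is the answer of player II at inning `α`. One weight
function serves all the stages: only its restriction to `stageEdge E ι β` matters at stage `β`. -/
noncomputable def playWt (E : X → X → Prop) (d : X → X → ℝ) (ι : Sym2 X → Ordinal.{u})
    (f : Ordinal.{u} → ℝ) : X → X → ℝ :=
  fun a b => if E a b then d a b else f (ι s(a, b))

/-- The set of weights that player I offers for the pair `xy`: the interval `(ď(x,y), d̂(x,y))`.
A strategy must also answer sequences that break the rules; the value `(0, ∞)` makes the offer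
legal there. -/
noncomputable def offer (E : X → X → Prop) (d : X → X → ℝ) (x y : X) : Set ℝ :=
  if checkd E d x y < hatd E d x y then Set.Ioo (checkd E d x y) (hatd E d x y) else Set.Ioi 0

/-- The extension by zero of a sequence of answers, so that unfinished plays have weights too. -/
noncomputable def zeroExtend {β : Ordinal.{u}} (t : ∀ α : Ordinal.{u}, α < β → ℝ)
    (α : Ordinal.{u}) : ℝ :=
  if h : α < β then t α h else 0

variable {E : X → X → Prop} {d : X → X → ℝ} {ι : Sym2 X → Ordinal.{u}} {β lam : Ordinal.{u}}
  {f g : Ordinal.{u} → ℝ} {x y a b : X}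

theorem offer_mem (E : X → X → Prop) (d : X → X → ℝ) (x y : X) :
    offer E d x y ∈ {U : Set ℝ | U.Nonempty ∧ IsOpen U ∧ U ⊆ Set.Ioi (0 : ℝ)} := by
  unfold offer
  split_ifs with h
  · exact ⟨Set.nonempty_Ioo.mpr h, isOpen_Ioo, fun r hr => (checkd_nonneg x y).trans_lt hr.1⟩
  · exact ⟨Set.nonempty_Ioi, isOpen_Ioi, subset_rfl⟩

theorem offer_congr {d' : X → X → ℝ} (h : ∀ ⦃a b⦄, E a b → d' a b = d a b) :
    offer E d' = offer E d := by
  unfold offer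
  rw [hatd_congr h, checkd_congr h]

theorem mk_mem_nonEdgePairs (hE : ∀ ⦃a b⦄, E a b → E b a) :
    s(x, y) ∈ nonEdgePairs E ↔ NonEdge E x y := by
  refine ⟨?_, fun h => ⟨x, y, rfl, h.ne, h.left_mem, h.right_mem, h.not_adj⟩⟩
  rintro ⟨a, b, h, hab, ha, hb, hEab⟩
  have hnon : NonEdge E a b := ⟨ha, hb, hab, hEab⟩
  rcases Sym2.eq_iff.mp h with ⟨rfl, rfl⟩ | ⟨rfl, rfl⟩
  exacts [hnon, hnon.symm hE]

theorem nonEdge_out (hE : ∀ ⦃a b⦄, E a b → E b a) {p : Sym2 X} (hp : p ∈ nonEdgePairs E) :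
    NonEdge E p.out.1 p.out.2 :=
  (mk_mem_nonEdgePairs hE).mp ((Quot.out_eq p).symm ▸ hp :)

theorem stageEdge_zero : stageEdge E ι 0 = E := by
  ext a b
  simp [stageEdge]

theorem stageEdge_mono : Monotone (stageEdge E ι) := fun _ _ h _ _ =>
  Or.imp_right (And.imp_right h.trans_lt')

theorem Vtx_stageEdge (hE : ∀ ⦃a b⦄, E a b → E b a) : Vtx (stageEdge E ι β) = Vtx E := by
  ext a
  refine ⟨?_, fun ⟨b, h⟩ => ⟨b, Or.inl h⟩⟩
  rintro ⟨b, h | ⟨h, -⟩⟩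
  exacts [⟨b, h⟩, ((mk_mem_nonEdgePairs hE).mp h).left_mem]

theorem stageEdge_add_one (hι : Set.InjOn ι (nonEdgePairs E)) (h : s(x, y) ∈ nonEdgePairs E) :
    stageEdge E ι (ι s(x, y) + 1) = extEdge (stageEdge E ι (ι s(x, y))) x y := by
  ext a b
  rw [extEdge, ← Sym2.eq_iff]
  simp only [stageEdge, Order.lt_add_one_iff, le_iff_lt_or_eq, or_assoc, and_or_left]
  refine or_congr_right (or_congr_right ⟨fun hab => hι hab.1 h hab.2, ?_⟩)
  intro hab
  rw [hab]
  exact ⟨h, rfl⟩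

theorem stageEdge_add_one_of_forall_ne (h : ∀ q ∈ nonEdgePairs E, ι q ≠ β) :
    stageEdge E ι (β + 1) = stageEdge E ι β := by
  ext a b
  refine or_congr_right (and_congr_right fun hab => ?_)
  rw [Order.lt_add_one_iff, (h _ hab).le_iff_lt]

theorem nonEdge_stageEdge (hE : ∀ ⦃a b⦄, E a b → E b a) (h : s(x, y) ∈ nonEdgePairs E) :
    NonEdge (stageEdge E ι (ι s(x, y))) x y := by
  obtain ⟨hx, hy, hxy, hnot⟩ := (mk_mem_nonEdgePairs hE).mp h
  rw [← Vtx_stageEdge (ι := ι) (β := ι s(x, y)) hE] at hx hy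
  exact ⟨hx, hy, hxy, fun h => h.elim hnot fun h => h.2.false⟩

theorem playWt_of_edge (h : E a b) : playWt E d ι f a b = d a b := if_pos h

theorem playWt_of_not_edge (h : ¬ E a b) : playWt E d ι f a b = f (ι s(a, b)) := if_neg h

theorem playWt_congr (h : ∀ ⦃α⦄, α < β → f α = g α) (hab : stageEdge E ι β a b) :
    playWt E d ι f a b = playWt E d ι g a b := by
  by_cases hE : E a b
  · rw [playWt_of_edge hE, playWt_of_edge hE]
  · rw [playWt_of_not_edge hE, playWt_of_not_edge hE, h (hab.resolve_left hE).2]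

theorem zeroExtend_of_lt {t : ∀ α : Ordinal.{u}, α < β → ℝ} {α : Ordinal.{u}} (h : α < β) :
    zeroExtend t α = t α h :=
  dif_pos h

theorem zeroExtend_restrict (hβ : β ≤ lam) (s : ∀ α : Ordinal.{u}, α < lam → ℝ) {α : Ordinal.{u}}
    (hα : α < β) : zeroExtend s α = zeroExtend (fun γ (hγ : γ < β) => s γ (hγ.trans_le hβ)) α := by
  rw [zeroExtend_of_lt hα, zeroExtend_of_lt]

theorem FloppyMetric.stage_add_one (hd : FloppyMetric E d) (hι : Set.InjOn ι (nonEdgePairs E))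
    (hxy : s(x, y) ∈ nonEdgePairs E)
    (hst : FloppyMetric (stageEdge E ι (ι s(x, y))) (playWt E d ι f))
    (hf : f (ι s(x, y)) ∈ offer (stageEdge E ι (ι s(x, y))) (playWt E d ι f) x y) :
    FloppyMetric (stageEdge E ι (ι s(x, y) + 1)) (playWt E d ι f) := by
  have hsymm := hd.1.1.symm
  have hnon := (mk_mem_nonEdgePairs hsymm).mp hxy
  have hstage : NonEdge (stageEdge E ι (ι s(x, y))) x y := nonEdge_stageEdge hsymm hxy
  have hwt : playWt E d ι f x y = f (ι s(x, y)) := playWt_of_not_edge hnon.not_adj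
  have hcomm : playWt E d ι f y x = playWt E d ι f x y := by
    rw [hwt, playWt_of_not_edge (hnon.symm hsymm).not_adj, Sym2.eq_swap]
  rw [offer, if_pos (hst.checkd_lt_hatd hstage), ← hwt] at hf
  rw [stageEdge_add_one hι hxy, ← extWt_self hcomm]
  exact hst.extend hstage hf.1 hf.2

theorem FloppyMetric.stage_natCast (hd : FloppyMetric E d) (hι : Set.InjOn ι (nonEdgePairs E))
    (hf : ∀ q ∈ nonEdgePairs E,
      f (ι q) ∈ offer (stageEdge E ι (ι q)) (playWt E d ι f) q.out.1 q.out.2) (n : ℕ) :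
    FloppyMetric (stageEdge E ι n) (playWt E d ι f) := by
  induction n with
  | zero =>
    rw [Nat.cast_zero, stageEdge_zero]
    exact hd.congr fun _ _ => playWt_of_edge
  | succ n ih =>
    rw [Nat.cast_succ]
    by_cases h : ∃ q ∈ nonEdgePairs E, ι q = n
    · obtain ⟨q, hq, hqn⟩ := h
      have hq' : s(q.out.1, q.out.2) = q := Quot.out_eq q
      rw [← hqn] at ih ⊢
      have hstep := hd.stage_add_one (x := q.out.1) (y := q.out.2) (f := f) hι
      rw [hq'] at hstep
      exact hstep hq ih (hf q hq)
    · push Not at h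
      rwa [stageEdge_add_one_of_forall_ne h]

theorem FloppyMetric.isFullMetricOn_playWt (hd : FloppyMetric E d)
    (hι : Set.InjOn ι (nonEdgePairs E)) (hω : ∀ q ∈ nonEdgePairs E, ι q < Ordinal.omega0)
    (hf : ∀ q ∈ nonEdgePairs E,
      f (ι q) ∈ offer (stageEdge E ι (ι q)) (playWt E d ι f) q.out.1 q.out.2) :
    IsFullMetricOn (Vtx E) (playWt E d ι f) := by
  refine IsFullMetricOn.of_directed
    (stageEdge_mono.comp (Nat.mono_cast (α := Ordinal.{u}))).directed_le
    (fun n => (hd.stage_natCast hι hf n).1) fun a ha b hb hab => ?_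
  by_cases hE : E a b
  · exact ⟨0, Or.inl hE⟩
  · have hq := (mk_mem_nonEdgePairs hd.1.1.symm).mpr ⟨ha, hb, hab, hE⟩
    obtain ⟨n, hn⟩ := Ordinal.lt_omega0.mp (hω _ hq)
    refine ⟨n + 1, Or.inr ⟨hq, ?_⟩⟩
    rw [hn]
    exact_mod_cast n.lt_succ_self

theorem offer_playWt_congr (h : ∀ ⦃α⦄, α < β → f α = g α) :
    offer (stageEdge E ι β) (playWt E d ι f) = offer (stageEdge E ι β) (playWt E d ι g) :=
  offer_congr fun _ _ => playWt_congr h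

theorem playRel_iff (hd : IsGraphPseudometric E d) (hι : Set.InjOn ι (nonEdgePairs E))
    (hlam : Set.MapsTo ι (nonEdgePairs E) (Set.Iio lam)) {q : ∀ α < lam, Sym2 X}
    (hq : ∀ α hα, q α hα ∈ nonEdgePairs E) (hqι : ∀ α hα, ι (q α hα) = α)
    (s : ∀ α : Ordinal.{u}, α < lam → ℝ) (a b : X) (r : ℝ) :
    ((E a b ∧ r = d a b) ∨ ∃ α, ∃ hα : α < lam,
      ((a = (q α hα).out.1 ∧ b = (q α hα).out.2) ∨ (a = (q α hα).out.2 ∧ b = (q α hα).out.1)) ∧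
        r = s α hα) ↔
      (a ∈ Vtx E ∧ b ∈ Vtx E ∧ a ≠ b) ∧ r = playWt E d ι (zeroExtend s) a b := by
  have hout (α hα) : s((q α hα).out.1, (q α hα).out.2) = q α hα := Quot.out_eq _
  simp only [← Sym2.eq_iff, hout]
  constructor
  · rintro (⟨h, rfl⟩ | ⟨α, hα, hab, rfl⟩)
    · refine ⟨⟨⟨b, h⟩, hd.right_mem h, ?_⟩, (playWt_of_edge h).symm⟩
      rintro rfl
      exact hd.irrefl a h
    · have hnon := (mk_mem_nonEdgePairs hd.symm).mp (hab ▸ hq α hα)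
      refine ⟨⟨hnon.left_mem, hnon.right_mem, hnon.ne⟩, ?_⟩
      rw [playWt_of_not_edge hnon.not_adj, hab, hqι, zeroExtend_of_lt hα]
  · rintro ⟨⟨ha, hb, hab⟩, rfl⟩
    by_cases h : E a b
    · exact Or.inl ⟨h, playWt_of_edge h⟩
    · have hmem := (mk_mem_nonEdgePairs hd.symm).mpr ⟨ha, hb, hab, h⟩
      have hlt : ι s(a, b) < lam := hlam hmem
      refine Or.inr ⟨_, hlt, hι hmem (hq _ _) (hqι _ hlt).symm, ?_⟩
      rw [playWt_of_not_edge h, zeroExtend_of_lt hlt]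

end Play

/-- If `d` is a floppy graph metric and the cardinal
`λ = |[V]² \ E|` is at most countable, then player I has a winning strategy in the
metric-extending game `Game_d(λ, τ)`, where `τ` is the family of all nonempty open
subsets of `(0, ∞)`. -/
theorem playerI_winning_strategy (E : X → X → Prop) (d : X → X → ℝ)
    (hd : FloppyMetric E d) (hcount : (nonEdgePairs E).Countable) :
    WinningStratI (Vtx E) E d (Cardinal.mk ↥(nonEdgePairs E)).ord
      {U : Set ℝ | U.Nonempty ∧ IsOpen U ∧ U ⊆ Set.Ioi (0 : ℝ)} := by
  obtain ⟨ι, hι⟩ := exists_bijOn_Iio_ord (nonEdgePairs E)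
  have hω : (Cardinal.mk (nonEdgePairs E)).ord ≤ Ordinal.omega0 :=
    Cardinal.ord_le_omega0.mpr hcount.le_aleph0
  have hsurj : ∀ β < (Cardinal.mk (nonEdgePairs E)).ord, ∃ p ∈ nonEdgePairs E, ι p = β := hι.surjOn
  choose q hq hqι using hsurj
  refine ⟨fun β hβ _ => (q β hβ).out, fun β hβ t => offer (stageEdge E ι β)
    (playWt E d ι (zeroExtend t)) (q β hβ).out.1 (q β hβ).out.2, fun _ _ _ => offer_mem _ _ _ _,
    fun β hβ _ => ?legal, fun s hs => ?full⟩
  case legal =>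
    have hnon := nonEdge_out hd.1.1.symm (hq β hβ)
    exact ⟨hnon.left_mem, hnon.right_mem, hnon.ne⟩
  case full =>
    have hanswer : ∀ p ∈ nonEdgePairs E, zeroExtend s (ι p) ∈
        offer (stageEdge E ι (ι p)) (playWt E d ι (zeroExtend s)) p.out.1 p.out.2 := by
      intro p hp
      have hlt := hι.mapsTo hp
      have hqp : q (ι p) hlt = p := hι.injOn (hq _ hlt) hp (hqι _ hlt)
      rw [zeroExtend_of_lt hlt, offer_playWt_congr fun _ => zeroExtend_restrict hlt.le s]
      simpa only [hqp] using hs _ hlt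
    simp only [playRel_iff hd.1.1 hι.injOn hι.mapsTo hq hqι]
    exact (hd.isFullMetricOn_playWt hι.injOn
      (fun p hp => (hι.mapsTo hp).trans_le hω) hanswer).isFullMetricRel

end GraphMetricPaper
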